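/- For every c ∈ (0, 1/2] and every C₁ > 0 there exist constants c₂, C₃ > 0 and ε₀ ∈ (0,1), depending only on c and C₁, such that the following holds. In the noise model with ε ∈ (0, ε₀), assume every entry of p lies in [c, 1−c], min_{k∈{1,…,m}} Pr_P[Π_k] ≥ c₂·ε^{1/2}·log^{1/4}(1/ε), and ‖q − E_{X∼P̃}[F(X,q)]‖₂ ≤ ε; let M be a real symmetric m×m matrix with zero diagonal satisfying ‖M − M_{P̃}^0‖₂ ≤ ε, and let α > 0 satisfy |α − min_k Pr_{P̃}[Π_k]| ≤ ε. If ‖M‖₂ ≤ C₁·ε·log(1/ε)/α, then d_TV(P_p, P_q) ≤ C₃·ε·√(log(1/ε)) / min_k Pr_P[Π_k]. -/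

import Mathlib

open scoped BigOperators Classical

/-- The index set `S` of parental configurations: pairs `(i, a)` where
`a : Parents i → Bool`. -/
abbrev BNIdx (d : ℕ) (Par : Fin d → Finset (Fin d)) :=
  (i : Fin d) × ({j : Fin d // j ∈ Par i} → Bool)

/-- The restriction of `x ∈ {0,1}^d` to the parents of node `i`. -/
def cfgOf {d : ℕ} (Par : Fin d → Finset (Fin d)) (x : Fin d → Bool) (i : Fin d) :
    {j : Fin d // j ∈ Par i} → Bool :=
  fun j => x j.1

/-- The Bayesian network `P_p` with conditional probability table `p`. -/
noncomputable def bnDist {d : ℕ} (Par : Fin d → Finset (Fin d))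
    (p : BNIdx d Par → ℝ) (x : Fin d → Bool) : ℝ :=
  ∏ i : Fin d, if x i then p ⟨i, cfgOf Par x i⟩ else 1 - p ⟨i, cfgOf Par x i⟩

/-- `Pr_R[Π_k]`, the probability of the parental configuration `k` under `R`. -/
noncomputable def prCfg {d : ℕ} (Par : Fin d → Finset (Fin d))
    (R : (Fin d → Bool) → ℝ) (k : BNIdx d Par) : ℝ :=
  ∑ x : Fin d → Bool, if cfgOf Par x k.1 = k.2 then R x else 0

/-- Probability of an event `A` under `R`. -/
noncomputable def prEvent {d : ℕ} (R : (Fin d → Bool) → ℝ)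
    (A : (Fin d → Bool) → Prop) : ℝ :=
  ∑ x : Fin d → Bool, if A x then R x else 0

/-- Expectation `E_{X ∼ R}[g(X)]`. -/
noncomputable def expec {d : ℕ} (R : (Fin d → Bool) → ℝ)
    (g : (Fin d → Bool) → ℝ) : ℝ :=
  ∑ x : Fin d → Bool, R x * g x

/-- The vector `F(x, q) ∈ ℝ^S`. -/
noncomputable def Fvec {d : ℕ} (Par : Fin d → Finset (Fin d))
    (x : Fin d → Bool) (q : BNIdx d Par → ℝ) (k : BNIdx d Par) : ℝ :=
  if cfgOf Par x k.1 = k.2 then (if x k.1 then 1 else 0) else q k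

/-- `R` is a probability distribution on the finite set `D`. -/
def IsProbDist {D : Type*} [Fintype D] (R : D → ℝ) : Prop :=
  (∀ x, 0 ≤ R x) ∧ ∑ x, R x = 1

/-- Total variation distance. -/
noncomputable def dTV {D : Type*} [Fintype D] (A B : D → ℝ) : ℝ :=
  (∑ x, |A x - B x|) / 2

/-- Squared Hellinger distance `d_H(A,B)² = 1 - Σ √(A(x)·B(x))`. -/
noncomputable def hellingerSq {D : Type*} [Fintype D] (A B : D → ℝ) : ℝ :=
  1 - ∑ x, Real.sqrt (A x * B x)

/-- Euclidean norm on `ℝ^ι`. -/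
noncomputable def enorm2 {ι : Type*} [Fintype ι] (v : ι → ℝ) : ℝ :=
  Real.sqrt (∑ k, v k ^ 2)

/-- The second-moment matrix `M_R` (relative to `q`). -/
noncomputable def covM {d : ℕ} (Par : Fin d → Finset (Fin d))
    (R : (Fin d → Bool) → ℝ) (q : BNIdx d Par → ℝ) :
    Matrix (BNIdx d Par) (BNIdx d Par) ℝ :=
  fun k l => expec R (fun x => (Fvec Par x q k - q k) * (Fvec Par x q l - q l))

/-- `M_R^0`: the matrix `M_R` with zeroed diagonal. -/
noncomputable def covM0 {d : ℕ} (Par : Fin d → Finset (Fin d))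
    (R : (Fin d → Bool) → ℝ) (q : BNIdx d Par → ℝ) :
    Matrix (BNIdx d Par) (BNIdx d Par) ℝ :=
  fun k l => if k = l then 0 else covM Par R q k l

/-- Spectral norm (ℓ²-operator norm) of a real matrix. -/
noncomputable def specNorm {ι : Type*} [Fintype ι] [DecidableEq ι]
    (M : Matrix ι ι ℝ) : ℝ :=
  ‖Matrix.toEuclideanCLM (𝕜 := ℝ) M‖



theorem sum_snoc {n : ℕ} (F : (Fin (n+1) → Bool) → ℝ) :
    ∑ x, F x = ∑ y : Fin n → Bool, (F (Fin.snoc y true : Fin (n+1) → Bool) + F (Fin.snoc y false : Fin (n+1) → Bool)) := by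
  rw [← (Fin.snocEquiv (fun _ : Fin (n+1) => Bool)).sum_comp, Fintype.sum_prod_type_right]
  simp [Fin.snocEquiv]

theorem sum_prod_eq : ∀ {d : ℕ} (f : Fin d → (Fin d → Bool) → ℝ) (K : Fin d → ℝ)
    (_ : ∀ i x y, (∀ j, j ≤ i → x j = y j) → f i x = f i y)
    (_ : ∀ i x, f i (Function.update x i true) + f i (Function.update x i false) = K i),
    ∑ x, ∏ i, f i x = ∏ i, K i := by
  intro d
  induction d with
  | zero => intro f K _ _; simp
  | succ n ih =>
    intro f K hdep hK
    rw [sum_snoc, Fin.prod_univ_castSucc]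
    rw [← ih (fun i y => f i.castSucc (Fin.snoc y false : Fin (n+1) → Bool)) (fun i => K i.castSucc), Finset.sum_mul]
    · refine Finset.sum_congr rfl fun y _ => ?_
      rw [Fin.prod_univ_castSucc, Fin.prod_univ_castSucc, ← hK (Fin.last n) (Fin.snoc y false)]
      rw [Fin.update_snoc_last, Fin.update_snoc_last, mul_add]
      congr 2
      refine Finset.prod_congr rfl fun i _ => hdep _ _ _ fun j hj => ?_
      have : j ≠ Fin.last n := by
        rintro rfl
        exact absurd hj (by simp)
      obtain ⟨j', rfl⟩ := Fin.exists_castSucc_eq.2 this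
      simp
    · intro i x y hxy
      refine hdep _ _ _ fun j hj => ?_
      have : j ≠ Fin.last n := by
        rintro rfl
        exact absurd hj (by simp)
      obtain ⟨j', rfl⟩ := Fin.exists_castSucc_eq.2 this
      simpa using hxy j' (by simpa using hj)
    · intro i x
      simp only [Fin.snoc_update]
      exact hK _ _

theorem sum_prod_le : ∀ {d : ℕ} (f : Fin d → (Fin d → Bool) → ℝ) (K : Fin d → ℝ)
    (_ : ∀ i x, 0 ≤ f i x)
    (_ : ∀ i x y, (∀ j, j ≤ i → x j = y j) → f i x = f i y)
    (_ : ∀ i x, f i (Function.update x i true) + f i (Function.update x i false) ≤ K i),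
    ∑ x, ∏ i, f i x ≤ ∏ i, K i := by
  intro d
  induction d with
  | zero => intro f K _ _ _; simp
  | succ n ih =>
    intro f K h0 hdep hK
    rw [sum_snoc, Fin.prod_univ_castSucc]
    have h1 := ih (fun i y => f i.castSucc (Fin.snoc y false : Fin (n+1) → Bool)) (fun i => K i.castSucc)
      (fun i x => h0 _ _) ?_ ?_
    · have hKl : 0 ≤ K (Fin.last n) :=
        le_trans (add_nonneg (h0 _ _) (h0 _ _)) (hK (Fin.last n) (fun _ => true))
      refine le_trans ?_ (mul_le_mul_of_nonneg_right h1 hKl)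
      rw [Finset.sum_mul]
      refine Finset.sum_le_sum fun y _ => ?_
      refine le_trans (le_of_eq ?_) (mul_le_mul_of_nonneg_left (hK (Fin.last n) (Fin.snoc y false)) (Finset.prod_nonneg fun i _ => h0 _ _))
      rw [Fin.prod_univ_castSucc, Fin.prod_univ_castSucc]
      rw [Fin.update_snoc_last, Fin.update_snoc_last, mul_add]
      congr 2
      refine Finset.prod_congr rfl fun i _ => hdep _ _ _ fun j hj => ?_
      have : j ≠ Fin.last n := by
        rintro rfl
        exact absurd hj (by simp)
      obtain ⟨j', rfl⟩ := Fin.exists_castSucc_eq.2 this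
      simp
    · intro i x y hxy
      refine hdep _ _ _ fun j hj => ?_
      have : j ≠ Fin.last n := by
        rintro rfl
        exact absurd hj (by simp)
      obtain ⟨j', rfl⟩ := Fin.exists_castSucc_eq.2 this
      simpa using hxy j' (by simpa using hj)
    · intro i x
      simp only [Fin.snoc_update]
      exact hK _ _

theorem exp_le_add_exp_sq (x : ℝ) : Real.exp x ≤ x + Real.exp (x^2) := by
  have h2 := Real.add_one_le_exp (x^2)
  rcases le_total |x| 1 with h | h
  · have h1 := (abs_le.1 (Real.abs_exp_sub_one_sub_id_le h)).2
    linarith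
  · rcases le_total 0 x with hx | hx
    · rw [abs_of_nonneg hx] at h
      have : Real.exp x ≤ Real.exp (x^2) := Real.exp_le_exp.2 (by nlinarith)
      linarith
    · rw [abs_of_nonpos hx] at h
      have : Real.exp x ≤ 1 := Real.exp_le_one_iff.2 hx
      nlinarith

/-- centered Bernoulli mgf -/
theorem bern_mgf (p s : ℝ) (h0 : 0 ≤ p) (h1 : p ≤ 1) :
    p * Real.exp (s * (1 - p)) + (1 - p) * Real.exp (s * (0 - p)) ≤ Real.exp (s^2) := by
  have a := exp_le_add_exp_sq (s * (1 - p))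
  have b := exp_le_add_exp_sq (s * (0 - p))
  have a' : Real.exp ((s * (1 - p))^2) ≤ Real.exp (s^2) := Real.exp_le_exp.2 (by
    rw [mul_pow]; nlinarith [sq_nonneg s, mul_nonneg h0 (sub_nonneg.2 h1), mul_nonneg (sq_nonneg s) (by nlinarith : 0 ≤ 1 - (1-p)^2)])
  have b' : Real.exp ((s * (0 - p))^2) ≤ Real.exp (s^2) := Real.exp_le_exp.2 (by
    rw [mul_pow]; nlinarith [mul_nonneg (sq_nonneg s) (by nlinarith : 0 ≤ 1 - (0-p)^2)])
  have a2 := mul_le_mul_of_nonneg_left (le_trans a (add_le_add_right a' _)) h0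
  have b2 := mul_le_mul_of_nonneg_left (le_trans b (add_le_add_right b' _)) (sub_nonneg.2 h1)
  nlinarith

/-- index of the configuration of node `i` seen at `x` -/
def kp {d : ℕ} (Par : Fin d → Finset (Fin d)) (x : Fin d → Bool) (i : Fin d) : BNIdx d Par :=
  ⟨i, cfgOf Par x i⟩

noncomputable def bit {d : ℕ} (x : Fin d → Bool) (i : Fin d) : ℝ := if x i then 1 else 0

/-- conditional factor -/
noncomputable def fac {d : ℕ} (Par : Fin d → Finset (Fin d)) (p : BNIdx d Par → ℝ)
    (i : Fin d) (x : Fin d → Bool) : ℝ :=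
  if x i then p (kp Par x i) else 1 - p (kp Par x i)

theorem bnDist_eq {d : ℕ} (Par : Fin d → Finset (Fin d)) (p : BNIdx d Par → ℝ) (x : Fin d → Bool) :
    bnDist Par p x = ∏ i, fac Par p i x := rfl

theorem kp_congr {d : ℕ} {Par : Fin d → Finset (Fin d)} (hP : ∀ i : Fin d, ∀ j ∈ Par i, j < i)
    {i : Fin d} {x y : Fin d → Bool} (h : ∀ j, j < i → x j = y j) : kp Par x i = kp Par y i := by
  unfold kp
  congr 1
  funext (j : {j : Fin d // j ∈ Par i})
  exact h j.1 (hP i j.1 j.2)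

theorem kp_update {d : ℕ} {Par : Fin d → Finset (Fin d)} (hP : ∀ i : Fin d, ∀ j ∈ Par i, j < i)
    (i : Fin d) (x : Fin d → Bool) (b : Bool) : kp Par (Function.update x i b) i = kp Par x i :=
  kp_congr hP fun j hj => Function.update_of_ne hj.ne _ _

section
variable {d : ℕ} {Par : Fin d → Finset (Fin d)}
  (p : BNIdx d Par → ℝ)

theorem fac_dep (hP : ∀ i : Fin d, ∀ j ∈ Par i, j < i) (i : Fin d) (x y : Fin d → Bool)
    (h : ∀ j, j ≤ i → x j = y j) : fac Par p i x = fac Par p i y := by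
  unfold fac
  rw [kp_congr hP (fun j hj => h j hj.le), h i le_rfl]

theorem sum_bn (hP : ∀ i : Fin d, ∀ j ∈ Par i, j < i) : ∑ x, bnDist Par p x = 1 := by
  have := sum_prod_eq (fac Par p) (fun _ => 1) (fac_dep p hP) (fun i x => by
    simp [fac, kp_update hP])
  simpa [bnDist_eq] using this

theorem orth (hP : ∀ i : Fin d, ∀ j ∈ Par i, j < i) (i : Fin d) (h : (Fin d → Bool) → ℝ)
    (hh : ∀ x y, (∀ j, j < i → x j = y j) → h x = h y) :
    expec (bnDist Par p) (fun x => (bit x i - p (kp Par x i)) * h x) = 0 := by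
  have key := sum_prod_eq
    (fun j x => fac Par p j x * if j = i then (bit x i - p (kp Par x i)) * h x else 1)
    (fun j => if j = i then 0 else 1) ?_ ?_
  · have h0 : ∏ j : Fin d, (if j = i then (0:ℝ) else 1) = 0 :=
      Finset.prod_eq_zero (Finset.mem_univ i) (by simp)
    rw [h0] at key
    rw [← key]
    unfold expec
    refine Finset.sum_congr rfl fun x _ => ?_
    rw [Finset.prod_mul_distrib, Finset.prod_ite_eq' Finset.univ i, ← bnDist_eq]
    simp
  · intro j x y hxy
    rw [fac_dep p hP j x y hxy]
    split_ifs with hji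
    · subst hji
      rw [kp_congr hP (fun k hk => hxy k hk.le), hh x y (fun k hk => hxy k hk.le)]
      simp [bit, hxy j le_rfl]
    · rfl
  · intro j x
    split_ifs with hji
    · subst hji
      have e : ∀ b, h (Function.update x j b) = h x := fun b =>
        hh _ _ fun k hk => Function.update_of_ne hk.ne _ _
      rw [kp_update hP, kp_update hP, e, e]
      simp [fac, bit, kp_update hP]
      ring
    · simp [fac, kp_update hP]

theorem fac_nonneg (hp : ∀ k, p k ∈ Set.Icc (0:ℝ) 1) (i : Fin d) (x : Fin d → Bool) :
    0 ≤ fac Par p i x := by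
  unfold fac
  split_ifs
  · exact (hp _).1
  · linarith [(hp (kp Par x i)).2]

theorem bn_nonneg (hp : ∀ k, p k ∈ Set.Icc (0:ℝ) 1) (x : Fin d → Bool) :
    0 ≤ bnDist Par p x := Finset.prod_nonneg fun i _ => fac_nonneg p hp i x

/-- sum over configurations restricted to those seen at x -/
theorem sum_kp (x : Fin d → Bool) (φ : BNIdx d Par → ℝ) :
    ∑ k : BNIdx d Par, (if cfgOf Par x k.1 = k.2 then φ k else 0) = ∑ i, φ (kp Par x i) := by
  rw [Fintype.sum_sigma]
  refine Finset.sum_congr rfl fun i _ => ?_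
  simp [kp]

theorem sum_kp_le (x : Fin d → Bool) (φ : BNIdx d Par → ℝ) (h0 : ∀ k, 0 ≤ φ k) :
    ∑ i, φ (kp Par x i) ≤ ∑ k, φ k := by
  rw [← sum_kp]
  refine Finset.sum_le_sum fun k _ => ?_
  split_ifs
  · exact le_rfl
  · exact h0 k

theorem expec_kp (R : (Fin d → Bool) → ℝ) (φ : BNIdx d Par → ℝ) :
    expec R (fun x => ∑ i, φ (kp Par x i)) = ∑ k, prCfg Par R k * φ k := by
  unfold expec prCfg
  simp_rw [← sum_kp, Finset.mul_sum, Finset.sum_mul]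
  rw [Finset.sum_comm]
  refine Finset.sum_congr rfl fun k _ => Finset.sum_congr rfl fun x _ => ?_
  split_ifs <;> simp

/-- the linear statistic -/
noncomputable def lin (Par : Fin d → Finset (Fin d)) (u q : BNIdx d Par → ℝ) (x : Fin d → Bool) : ℝ :=
  ∑ i, u (kp Par x i) * (bit x i - q (kp Par x i))

theorem mgf (hP : ∀ i : Fin d, ∀ j ∈ Par i, j < i) (hp : ∀ k, p k ∈ Set.Icc (0:ℝ) 1)
    (u : BNIdx d Par → ℝ) (lam : ℝ) :
    expec (bnDist Par p) (fun x => Real.exp (lam * lin Par u p x)) ≤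
      Real.exp (lam ^ 2 * ∑ k, u k ^ 2) := by
  have key := sum_prod_le
    (fun i x => fac Par p i x * Real.exp (lam * (u (kp Par x i) * (bit x i - p (kp Par x i)))))
    (fun i => Real.exp (lam ^ 2 * ∑ a, u ⟨i, a⟩ ^ 2)) ?_ ?_ ?_
  · rw [← Real.exp_sum, ← Finset.mul_sum, ← Fintype.sum_sigma (fun k : BNIdx d Par => u k ^ 2)] at key
    refine le_trans (le_of_eq ?_) key
    unfold expec
    refine Finset.sum_congr rfl fun x _ => ?_
    rw [Finset.prod_mul_distrib, ← bnDist_eq, ← Real.exp_sum, ← Finset.mul_sum]; rfl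
  · intro i x
    exact mul_nonneg (fac_nonneg p hp i x) (Real.exp_nonneg _)
  · intro i x y hxy
    rw [fac_dep p hP i x y hxy, kp_congr hP (fun k hk => hxy k hk.le)]
    simp [bit, hxy i le_rfl]
  · intro i x
    rw [kp_update hP, kp_update hP]
    have := bern_mgf (p (kp Par x i)) (lam * u (kp Par x i)) (hp _).1 (hp _).2
    refine le_trans (le_of_eq ?_) (le_trans this (Real.exp_le_exp.2 ?_))
    · simp [fac, bit, kp_update hP, mul_assoc]
    · rw [mul_pow]
      refine mul_le_mul_of_nonneg_left ?_ (sq_nonneg _)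
      exact Finset.single_le_sum (f := fun a => u ⟨i, a⟩ ^ 2) (fun a _ => sq_nonneg _)
        (Finset.mem_univ (cfgOf Par x i))

end

section
variable {d : ℕ}

theorem expec_add (R g h : (Fin d → Bool) → ℝ) :
    expec R (fun x => g x + h x) = expec R g + expec R h := by
  simp [expec, mul_add, Finset.sum_add_distrib]

theorem expec_smul (R g : (Fin d → Bool) → ℝ) (a : ℝ) :
    expec R (fun x => a * g x) = a * expec R g := by
  simp only [expec, Finset.mul_sum]
  exact Finset.sum_congr rfl fun x _ => by ring

theorem expec_sum {ι : Type*} (s : Finset ι) (R : (Fin d → Bool) → ℝ) (g : ι → (Fin d → Bool) → ℝ) :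
    expec R (fun x => ∑ i ∈ s, g i x) = ∑ i ∈ s, expec R (g i) := by
  simp only [expec, Finset.mul_sum]
  exact Finset.sum_comm

theorem expec_mono (R g h : (Fin d → Bool) → ℝ) (hR : ∀ x, 0 ≤ R x) (hgh : ∀ x, g x ≤ h x) :
    expec R g ≤ expec R h :=
  Finset.sum_le_sum fun x _ => mul_le_mul_of_nonneg_left (hgh x) (hR x)

theorem expec_nonneg (R g : (Fin d → Bool) → ℝ) (hR : ∀ x, 0 ≤ R x) (hg : ∀ x, 0 ≤ g x) :
    0 ≤ expec R g :=
  Finset.sum_nonneg fun x _ => mul_nonneg (hR x) (hg x)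

theorem expec_const (R : (Fin d → Bool) → ℝ) (a : ℝ) :
    expec R (fun _ => a) = (∑ x, R x) * a := by
  simp [expec, Finset.sum_mul]

theorem expec_cs (R g h : (Fin d → Bool) → ℝ) (hR : ∀ x, 0 ≤ R x) :
    expec R (fun x => g x * h x) ^ 2 ≤ expec R (fun x => g x ^ 2) * expec R (fun x => h x ^ 2) := by
  have := Finset.sum_mul_sq_le_sq_mul_sq Finset.univ (fun x => Real.sqrt (R x) * g x)
    (fun x => Real.sqrt (R x) * h x)
  simp only [mul_pow, Real.sq_sqrt (hR _)] at this
  refine le_trans (le_of_eq ?_) this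
  congr 1
  refine Finset.sum_congr rfl fun x _ => ?_
  have := Real.mul_self_sqrt (hR x)
  linear_combination (-g x * h x) * this

theorem sq_le_tail (N τ lam : ℝ) (hτ : 0 < τ) (hl : 2 ≤ lam * τ) :
    N ^ 2 ≤ τ ^ 2 + τ ^ 2 * Real.exp (-(lam * τ)) * (Real.exp (lam * N) + Real.exp (-lam * N)) := by
  have e : Real.exp (lam * |N|) ≤ Real.exp (lam * N) + Real.exp (-lam * N) := by
    rcases abs_cases N with ⟨h, _⟩ | ⟨h, _⟩ <;> rw [h]
    · linarith [Real.exp_pos (-lam * N)]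
    · have : lam * -N = -lam * N := by ring
      rw [this]; linarith [Real.exp_pos (lam * N)]
  have hpos : 0 ≤ τ ^ 2 * Real.exp (-(lam * τ)) := by positivity
  have h1 := mul_le_mul_of_nonneg_left e hpos
  rcases le_total |N| τ with h | h
  · have : N ^ 2 ≤ τ ^ 2 := by rw [← sq_abs]; gcongr
    have h3 : 0 ≤ τ ^ 2 * Real.exp (-(lam * τ)) * Real.exp (lam * |N|) := by positivity
    linarith
  · have h2 : |N| / τ ≤ Real.exp (|N| / τ - 1) := by
      have := Real.add_one_le_exp (|N| / τ - 1); linarith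
    have h3 : (|N| / τ) ^ 2 ≤ Real.exp (-(lam * τ)) * Real.exp (lam * |N|) := by
      calc (|N| / τ) ^ 2 ≤ (Real.exp (|N| / τ - 1)) ^ 2 := by gcongr
        _ = Real.exp (2 * (|N| / τ - 1)) := by rw [← Real.exp_nat_mul]; norm_num
        _ ≤ Real.exp (-(lam * τ) + lam * |N|) := by
          refine Real.exp_le_exp.2 ?_
          have : -(lam * τ) + lam * |N| = (lam * τ) * (|N| / τ - 1) := by field_simp; ring
          rw [this]
          refine mul_le_mul_of_nonneg_right hl ?_
          rw [sub_nonneg, le_div_iff₀ hτ]; linarith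
        _ = _ := Real.exp_add _ _
    have h4 : N ^ 2 = τ ^ 2 * (|N| / τ) ^ 2 := by
      rw [div_pow, sq_abs]; field_simp
    have h5 := mul_le_mul_of_nonneg_left h3 (sq_nonneg τ)
    nlinarith [sq_nonneg τ]

variable {Par : Fin d → Finset (Fin d)}

theorem tail_moment (hP : ∀ i : Fin d, ∀ j ∈ Par i, j < i) (p : BNIdx d Par → ℝ)
    (hp : ∀ k, p k ∈ Set.Icc (0:ℝ) 1) (u : BNIdx d Par → ℝ) (hu : ∑ k, u k ^ 2 ≤ 1)
    (R : (Fin d → Bool) → ℝ) (hR0 : ∀ x, 0 ≤ R x) (w ε : ℝ) (hε : 0 < ε)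
    (hw : w ≤ 2) (hR1 : ∀ x, R x ≤ w * bnDist Par p x) (hR2 : ∑ x, R x ≤ 2 * ε)
    (hl : 1 ≤ Real.log (1 / ε)) :
    expec R (fun x => lin Par u p x ^ 2) ≤ 24 * ε * Real.log (1 / ε) := by
  set l := Real.log (1 / ε) with hldef
  have hexpl : Real.exp (-l) = ε := by
    rw [hldef, one_div, Real.log_inv, neg_neg, Real.exp_log hε]
  set τ := 2 * Real.sqrt l with hτd
  set lam := Real.sqrt l with hlam
  have hsl : Real.sqrt l ^ 2 = l := Real.sq_sqrt (by linarith)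
  have hτ : 0 < τ := by have := Real.sqrt_pos.2 (by linarith : 0 < l); linarith
  have hlt : lam * τ = 2 * l := by rw [hτd]; nlinarith
  have hτ2 : τ ^ 2 = 4 * l := by rw [hτd]; nlinarith
  have pt := fun x => sq_le_tail (lin Par u p x) τ lam hτ (by rw [hlt]; linarith)
  have h1 := expec_mono R _ _ hR0 pt
  rw [expec_add, expec_const, expec_smul] at h1
  set G := fun x => Real.exp (lam * lin Par u p x) + Real.exp (-lam * lin Par u p x) with hG
  have hG0 : ∀ x, 0 ≤ G x := fun x => by positivity
  have h2 : expec R G ≤ w * expec (bnDist Par p) G := by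
    rw [expec, expec, Finset.mul_sum]
    refine Finset.sum_le_sum fun x _ => ?_
    rw [← mul_assoc]
    exact mul_le_mul_of_nonneg_right (hR1 x) (hG0 x)
  have hm : ∀ t : ℝ, t ^ 2 = l → expec (bnDist Par p) (fun x => Real.exp (t * lin Par u p x)) ≤ Real.exp l := by
    intro t ht
    refine (mgf p hP hp u t).trans (Real.exp_le_exp.2 ?_)
    rw [ht]; nlinarith
  have h3 : expec (bnDist Par p) G ≤ 2 * Real.exp l := by
    rw [hG, expec_add]
    have := hm lam hsl
    have := hm (-lam) (by rw [neg_sq]; exact hsl)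
    linarith
  have h30 : 0 ≤ expec (bnDist Par p) G := expec_nonneg _ _ (bn_nonneg p hp) hG0
  have h4 : expec R G ≤ 4 * Real.exp l := by nlinarith
  have h5 : Real.exp (-(lam * τ)) * Real.exp l = ε := by
    rw [hlt, ← Real.exp_add, ← hexpl]; congr 1; ring
  rw [hτ2] at h1
  have h6 : 4 * l * Real.exp (-(lam * τ)) * expec R G ≤ 16 * l * ε := by
    have := mul_le_mul_of_nonneg_left h4 (by positivity : 0 ≤ 4 * l * Real.exp (-(lam * τ)))
    refine this.trans (le_of_eq ?_)
    linear_combination 16 * l * h5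
  have h7 : (∑ x, R x) * (4 * l) ≤ 2 * ε * (4 * l) := mul_le_mul_of_nonneg_right hR2 (by linarith)
  refine h1.trans ?_
  linarith

theorem lin_eq (u q : BNIdx d Par → ℝ) (x : Fin d → Bool) :
    lin Par u q x = ∑ k, u k * (Fvec Par x q k - q k) := by
  have := sum_kp (Par := Par) x (fun k => u k * (bit x k.1 - q k))
  rw [lin]
  refine Eq.trans this.symm (Finset.sum_congr rfl fun k _ => ?_)
  unfold Fvec bit
  split_ifs <;> simp

theorem linsq_eq (u q : BNIdx d Par → ℝ) (x : Fin d → Bool) :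
    ∑ i, (u (kp Par x i) * (bit x i - q (kp Par x i))) ^ 2 =
      ∑ k, (u k * (Fvec Par x q k - q k)) ^ 2 := by
  have := sum_kp (Par := Par) x (fun k => (u k * (bit x k.1 - q k)) ^ 2)
  refine Eq.trans this.symm (Finset.sum_congr rfl fun k _ => ?_)
  unfold Fvec bit
  split_ifs <;> simp

theorem quad_le {ι : Type*} [Fintype ι] [DecidableEq ι] (M : Matrix ι ι ℝ) (u : ι → ℝ)
    (hu : ∑ k, u k ^ 2 ≤ 1) : ∑ k, ∑ l, u k * u l * M k l ≤ specNorm M := by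
  have hn : ‖WithLp.toLp 2 u‖ ≤ 1 := by
    rw [EuclideanSpace.norm_eq]
    refine Real.sqrt_le_iff.2 ⟨zero_le_one, ?_⟩
    simpa using hu
  have h1 := real_inner_le_norm (WithLp.toLp 2 u) (Matrix.toEuclideanCLM (𝕜 := ℝ) M (WithLp.toLp 2 u))
  have h2 := (Matrix.toEuclideanCLM (𝕜 := ℝ) M).le_opNorm (WithLp.toLp 2 u)
  have h3 : inner ℝ (WithLp.toLp 2 u) (Matrix.toEuclideanCLM (𝕜 := ℝ) M (WithLp.toLp 2 u)) =
      ∑ k, ∑ l, u k * u l * M k l := by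
    rw [Matrix.toEuclideanCLM_toLp]
    simp only [PiLp.inner_apply, Matrix.mulVec, dotProduct]
    refine Finset.sum_congr rfl fun k _ => ?_
    simp [Finset.sum_mul]
    exact Finset.sum_congr rfl fun l _ => by ring
  rw [← h3]
  have h0 : 0 ≤ specNorm M := norm_nonneg _
  have hn0 := norm_nonneg (WithLp.toLp 2 u)
  change _ ≤ specNorm M * _ at h2
  have h4 : ‖Matrix.toEuclideanCLM (𝕜 := ℝ) M (WithLp.toLp 2 u)‖ ≤ specNorm M := by nlinarith
  refine h1.trans ?_
  have := norm_nonneg (Matrix.toEuclideanCLM (𝕜 := ℝ) M (WithLp.toLp 2 u))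
  nlinarith

theorem quad_form (R : (Fin d → Bool) → ℝ) (u q : BNIdx d Par → ℝ) (hu : ∑ k, u k ^ 2 ≤ 1) :
    expec R (fun x => lin Par u q x ^ 2) -
      expec R (fun x => ∑ i, (u (kp Par x i) * (bit x i - q (kp Par x i))) ^ 2)
      ≤ specNorm (covM0 Par R q) := by
  refine le_trans (le_of_eq ?_) (quad_le _ u hu)
  have h1 : expec R (fun x => lin Par u q x ^ 2) = ∑ k, ∑ l, u k * u l * covM Par R q k l := by
    simp only [lin_eq, sq, Finset.sum_mul_sum, expec_sum, covM]
    refine Finset.sum_congr rfl fun k _ => Finset.sum_congr rfl fun l _ => ?_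
    rw [← expec_smul]
    congr 1; funext x; ring
  have h2 : expec R (fun x => ∑ i, (u (kp Par x i) * (bit x i - q (kp Par x i))) ^ 2) =
      ∑ k, u k * u k * covM Par R q k k := by
    simp only [linsq_eq, expec_sum, covM]
    refine Finset.sum_congr rfl fun k _ => ?_
    rw [← expec_smul]
    congr 1; funext x; ring
  rw [h1, h2, ← Finset.sum_sub_distrib]
  refine Finset.sum_congr rfl fun k _ => ?_
  have h3 : u k * u k * covM Par R q k k = ∑ l, if k = l then u k * u l * covM Par R q k l else 0 := by
    simp
  rw [h3, ← Finset.sum_sub_distrib]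
  refine Finset.sum_congr rfl fun l _ => ?_
  unfold covM0
  split_ifs <;> simp

end

section
variable {d : ℕ} {Par : Fin d → Finset (Fin d)}

/-- bias statistic -/
noncomputable def bias (Par : Fin d → Finset (Fin d)) (u p q : BNIdx d Par → ℝ) (x : Fin d → Bool) : ℝ :=
  ∑ i, u (kp Par x i) * (p (kp Par x i) - q (kp Par x i))

theorem lin_split (u p q : BNIdx d Par → ℝ) (x : Fin d → Bool) :
    lin Par u q x = lin Par u p x + bias Par u p q x := by
  unfold lin bias
  rw [← Finset.sum_add_distrib]
  exact Finset.sum_congr rfl fun i _ => by ring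

theorem bias_sq_le (u p q : BNIdx d Par → ℝ) (hu : ∑ k, u k ^ 2 ≤ 1) (x : Fin d → Bool) :
    bias Par u p q x ^ 2 ≤ ∑ i, (p (kp Par x i) - q (kp Par x i)) ^ 2 := by
  have h := Finset.sum_mul_sq_le_sq_mul_sq Finset.univ (fun i => u (kp Par x i))
    (fun i => p (kp Par x i) - q (kp Par x i))
  have h1 := sum_kp_le (Par := Par) x (fun k => u k ^ 2) (fun k => sq_nonneg _)
  have h2 : 0 ≤ ∑ i, (p (kp Par x i) - q (kp Par x i)) ^ 2 := Finset.sum_nonneg fun i _ => sq_nonneg _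
  refine h.trans ?_
  have := mul_le_mul_of_nonneg_right (h1.trans hu) h2
  linarith

theorem orth_kp (hP : ∀ i : Fin d, ∀ j ∈ Par i, j < i) (p φ : BNIdx d Par → ℝ) (i : Fin d) :
    expec (bnDist Par p) (fun x => (bit x i - p (kp Par x i)) * φ (kp Par x i)) = 0 :=
  orth p hP i _ fun x y h => by rw [kp_congr hP h]

theorem expec_linp (hP : ∀ i : Fin d, ∀ j ∈ Par i, j < i) (p u : BNIdx d Par → ℝ) :
    expec (bnDist Par p) (lin Par u p) = 0 := by
  have : lin Par u p = fun x => ∑ i, (bit x i - p (kp Par x i)) * u (kp Par x i) := by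
    funext x; exact Finset.sum_congr rfl fun i _ => mul_comm _ _
  rw [this, expec_sum]
  exact Finset.sum_eq_zero fun i _ => orth_kp hP p u i

theorem expec_linp_sq (hP : ∀ i : Fin d, ∀ j ∈ Par i, j < i) (p u : BNIdx d Par → ℝ) :
    expec (bnDist Par p) (fun x => lin Par u p x ^ 2) =
      expec (bnDist Par p) (fun x => ∑ i, (u (kp Par x i) * (bit x i - p (kp Par x i))) ^ 2) := by
  simp only [lin, sq, Finset.sum_mul_sum, expec_sum]
  refine Finset.sum_congr rfl fun i _ => ?_
  refine Finset.sum_eq_single i (fun j _ hji => ?_) (fun h => absurd (Finset.mem_univ i) h)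
  rcases lt_or_gt_of_ne hji with h | h
  · rw [← orth p hP i (fun x => u (kp Par x i) * (u (kp Par x j) * (bit x j - p (kp Par x j)))) ?_]
    · congr 1; funext x; ring
    · intro x y hxy
      have e1 := kp_congr hP hxy
      have e2 := kp_congr (i := j) hP (fun k hk => hxy k (hk.trans h))
      rw [e1, e2]; simp [bit, hxy j h]
  · rw [← orth p hP j (fun x => u (kp Par x j) * (u (kp Par x i) * (bit x i - p (kp Par x i)))) ?_]
    · congr 1; funext x; ring
    · intro x y hxy
      have e1 := kp_congr hP hxy
      have e2 := kp_congr (i := i) hP (fun k hk => hxy k (hk.trans h))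
      rw [e1, e2]; simp [bit, hxy i h]

theorem bit_sub_sq_le (p : BNIdx d Par → ℝ) (hp : ∀ k, p k ∈ Set.Icc (0:ℝ) 1) (x : Fin d → Bool)
    (i : Fin d) (k : BNIdx d Par) : (bit x i - p k) ^ 2 ≤ 1 := by
  have := (hp k).1
  have := (hp k).2
  unfold bit
  split_ifs <;> nlinarith

theorem diag_le (q u : BNIdx d Par → ℝ) (hq : ∀ k, q k ∈ Set.Icc (0:ℝ) 1)
    (hu : ∑ k, u k ^ 2 ≤ 1) (x : Fin d → Bool) :
    ∑ i, (u (kp Par x i) * (bit x i - q (kp Par x i))) ^ 2 ≤ 1 := by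
  refine le_trans (Finset.sum_le_sum fun i _ => ?_)
    ((sum_kp_le (Par := Par) x (fun k => u k ^ 2) (fun k => sq_nonneg _)).trans hu)
  rw [mul_pow]
  exact mul_le_of_le_one_right (sq_nonneg _) (bit_sub_sq_le q hq x i _)

theorem P_side (hP : ∀ i : Fin d, ∀ j ∈ Par i, j < i) (p q u : BNIdx d Par → ℝ)
    (hp : ∀ k, p k ∈ Set.Icc (0:ℝ) 1) (hu : ∑ k, u k ^ 2 ≤ 1) (D : ℝ) (hD : 0 ≤ D)
    (hD2 : ∑ k, prCfg Par (bnDist Par p) k * (p k - q k) ^ 2 ≤ D ^ 2) :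
    expec (bnDist Par p) (fun x => ∑ i, (u (kp Par x i) * (bit x i - q (kp Par x i))) ^ 2) -
      expec (bnDist Par p) (fun x => lin Par u q x ^ 2) ≤ 2 * D + D ^ 2 := by
  have hb := bn_nonneg p hp
  rw [← expec_kp (bnDist Par p) (fun k => (p k - q k) ^ 2)] at hD2
  set P := bnDist Par p with hPd
  have e1 : expec P (fun x => lin Par u q x ^ 2) = expec P (fun x => lin Par u p x ^ 2) +
      2 * expec P (fun x => lin Par u p x * bias Par u p q x) + expec P (fun x => bias Par u p q x ^ 2) := by
    rw [← expec_smul, ← expec_add, ← expec_add]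
    congr 1; funext x; rw [lin_split u p q]; ring
  have e2 : expec P (fun x => ∑ i, (u (kp Par x i) * (bit x i - q (kp Par x i))) ^ 2) =
      expec P (fun x => ∑ i, (u (kp Par x i) * (bit x i - p (kp Par x i))) ^ 2) +
      expec P (fun x => ∑ i, (bit x i - p (kp Par x i)) *
        (fun k => 2 * u k ^ 2 * (p k - q k)) (kp Par x i)) +
      expec P (fun x => ∑ i, (u (kp Par x i) * (p (kp Par x i) - q (kp Par x i))) ^ 2) := by
    rw [← expec_add, ← expec_add]
    congr 1; funext x; rw [← Finset.sum_add_distrib, ← Finset.sum_add_distrib]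
    exact Finset.sum_congr rfl fun i _ => by ring
  have e3 : expec P (fun x => ∑ i, (bit x i - p (kp Par x i)) *
        (fun k => 2 * u k ^ 2 * (p k - q k)) (kp Par x i)) = 0 := by
    rw [expec_sum]
    exact Finset.sum_eq_zero fun i _ => orth_kp hP p (fun k => 2 * u k ^ 2 * (p k - q k)) i
  have e4 := expec_linp_sq hP p u
  have e5 : expec P (fun x => lin Par u p x ^ 2) ≤ 1 := by
    rw [hPd, e4]
    refine (expec_mono _ _ (fun _ => 1) hb (diag_le p u hp hu)).trans ?_
    rw [expec_const, sum_bn p hP, mul_one]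
  have e6 : expec P (fun x => bias Par u p q x ^ 2) ≤ D ^ 2 :=
    (expec_mono _ _ _ hb (bias_sq_le u p q hu)).trans hD2
  have e60 : 0 ≤ expec P (fun x => bias Par u p q x ^ 2) := expec_nonneg _ _ hb fun x => sq_nonneg _
  have e50 : 0 ≤ expec P (fun x => lin Par u p x ^ 2) := expec_nonneg _ _ hb fun x => sq_nonneg _
  have e7 := expec_cs P (lin Par u p) (bias Par u p q) hb
  have e8 : |expec P (fun x => lin Par u p x * bias Par u p q x)| ≤ D := by
    refine abs_le_of_sq_le_sq ?_ hD
    nlinarith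
  have e9 : expec P (fun x => ∑ i, (u (kp Par x i) * (p (kp Par x i) - q (kp Par x i))) ^ 2) ≤ D ^ 2 := by
    refine (expec_mono _ _ _ hb fun x => Finset.sum_le_sum fun i _ => ?_).trans hD2
    rw [mul_pow]
    refine mul_le_of_le_one_left (sq_nonneg _) (le_trans ?_ hu)
    exact Finset.single_le_sum (f := fun k => u k ^ 2) (fun k _ => sq_nonneg _) (Finset.mem_univ _)
  have e10 := (abs_le.1 e8).1
  linarith

theorem fac_pos (p : BNIdx d Par → ℝ) (hp : ∀ k, p k ∈ Set.Ioo (0:ℝ) 1) (i : Fin d) (x : Fin d → Bool) :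
    0 < fac Par p i x := by
  unfold fac
  split_ifs
  · exact (hp _).1
  · linarith [(hp (kp Par x i)).2]

theorem tv_le_kl (hP : ∀ i : Fin d, ∀ j ∈ Par i, j < i) (p q : BNIdx d Par → ℝ)
    (hp : ∀ k, p k ∈ Set.Ioo (0:ℝ) 1) (hq : ∀ k, q k ∈ Set.Ioo (0:ℝ) 1) :
    dTV (bnDist Par p) (bnDist Par q) ^ 2 ≤
      ∑ k, prCfg Par (bnDist Par p) k * ((p k - q k) ^ 2 / (q k * (1 - q k))) := by
  have pp : ∀ x, 0 < bnDist Par p x := fun x => Finset.prod_pos fun i _ => fac_pos p hp i x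
  have qp : ∀ x, 0 < bnDist Par q x := fun x => Finset.prod_pos fun i _ => fac_pos q hq i x
  rw [← expec_kp]
  set g : BNIdx d Par → ℝ := fun k => (p k - q k) ^ 2 / (q k * (1 - q k)) with hg
  set h : BNIdx d Par → ℝ := fun k => (q k - p k) / (q k * (1 - q k)) with hh
  -- pointwise affinity bound
  have pt : ∀ x, bnDist Par p x * (1 + (1/2) * (∑ i, (bit x i - p (kp Par x i)) * h (kp Par x i) +
      (-1) * ∑ i, g (kp Par x i))) ≤ Real.sqrt (bnDist Par p x) * Real.sqrt (bnDist Par q x) := by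
    intro x
    have hr : Real.sqrt (bnDist Par q x) = Real.sqrt (bnDist Par p x) *
        Real.exp ((1/2) * (Real.log (bnDist Par q x) - Real.log (bnDist Par p x))) := by
      rw [mul_sub, sub_eq_add_neg, Real.exp_add, Real.exp_neg]
      have : ∀ y : ℝ, 0 < y → Real.exp (1/2 * Real.log y) = Real.sqrt y := by
        intro y hy
        rw [Real.sqrt_eq_rpow, Real.rpow_def_of_pos hy]; congr 1; ring
      rw [this _ (qp x), this _ (pp x)]
      have := Real.sqrt_pos.2 (pp x)
      field_simp
    rw [hr, ← mul_assoc, Real.mul_self_sqrt (pp x).le]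
    refine mul_le_mul_of_nonneg_left ?_ (pp x).le
    refine le_trans ?_ (Real.add_one_le_exp _)
    rw [add_comm _ (1:ℝ)]
    refine add_le_add_right (mul_le_mul_of_nonneg_left ?_ (by norm_num)) _
    rw [bnDist_eq, bnDist_eq, Real.log_prod (fun i _ => (fac_pos q hq i x).ne'),
      Real.log_prod (fun i _ => (fac_pos p hp i x).ne'), ← Finset.sum_sub_distrib, Finset.mul_sum,
      ← Finset.sum_add_distrib]
    refine Finset.sum_le_sum fun i _ => ?_
    have a1 := fac_pos p hp i x
    have a2 := fac_pos q hq i x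
    have a3 := Real.log_le_sub_one_of_pos (div_pos a1 a2)
    rw [Real.log_div a1.ne' a2.ne'] at a3
    have b1 := (hq (kp Par x i)).1
    have b2 : 0 < 1 - q (kp Par x i) := by linarith [(hq (kp Par x i)).2]
    have : (bit x i - p (kp Par x i)) * h (kp Par x i) + (-1) * g (kp Par x i) =
        1 - fac Par p i x / fac Par q i x := by
      rw [hg, hh]
      unfold fac bit
      dsimp only
      split_ifs <;> field_simp <;> ring
    rw [this]; linarith
  have s1 := Finset.sum_le_sum fun x (_ : x ∈ Finset.univ) => pt x
  have s2 : ∑ x, bnDist Par p x * (1 + (1/2) * (∑ i, (bit x i - p (kp Par x i)) * h (kp Par x i) +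
      (-1) * ∑ i, g (kp Par x i))) = 1 - 1/2 * expec (bnDist Par p) (fun x => ∑ i, g (kp Par x i)) := by
    change expec (bnDist Par p) (fun x => 1 + (1/2) * (∑ i, (bit x i - p (kp Par x i)) * h (kp Par x i) +
      (-1) * ∑ i, g (kp Par x i))) = _
    rw [expec_add, expec_smul, expec_add, expec_const, sum_bn p hP, expec_smul, expec_sum,
      Finset.sum_eq_zero (fun i _ => orth_kp hP p h i)]
    ring
  rw [s2] at s1
  set BC := ∑ x, Real.sqrt (bnDist Par p x) * Real.sqrt (bnDist Par q x) with hBC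
  have cs := Finset.sum_mul_sq_le_sq_mul_sq Finset.univ
    (fun x => |Real.sqrt (bnDist Par p x) - Real.sqrt (bnDist Par q x)|)
    (fun x => Real.sqrt (bnDist Par p x) + Real.sqrt (bnDist Par q x))
  have c1 : ∀ x, |Real.sqrt (bnDist Par p x) - Real.sqrt (bnDist Par q x)| *
      (Real.sqrt (bnDist Par p x) + Real.sqrt (bnDist Par q x)) = |bnDist Par p x - bnDist Par q x| := by
    intro x
    have := Real.mul_self_sqrt (pp x).le
    have := Real.mul_self_sqrt (qp x).le
    rw [← abs_of_nonneg (by positivity : 0 ≤ Real.sqrt (bnDist Par p x) + Real.sqrt (bnDist Par q x)),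
      ← abs_mul]
    congr 1
    linarith
  have c2 : ∑ x, |Real.sqrt (bnDist Par p x) - Real.sqrt (bnDist Par q x)| ^ 2 = 2 - 2 * BC := by
    have : ∀ x, |Real.sqrt (bnDist Par p x) - Real.sqrt (bnDist Par q x)| ^ 2 =
        bnDist Par p x + bnDist Par q x - 2 * (Real.sqrt (bnDist Par p x) * Real.sqrt (bnDist Par q x)) := by
      intro x
      rw [sq_abs]
      linear_combination Real.sq_sqrt (pp x).le + Real.sq_sqrt (qp x).le
    simp only [this, Finset.sum_sub_distrib, Finset.sum_add_distrib, ← Finset.mul_sum, sum_bn p hP, sum_bn q hP]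
    rw [hBC]; ring
  have c3 : ∑ x, (Real.sqrt (bnDist Par p x) + Real.sqrt (bnDist Par q x)) ^ 2 = 2 + 2 * BC := by
    have : ∀ x, (Real.sqrt (bnDist Par p x) + Real.sqrt (bnDist Par q x)) ^ 2 =
        bnDist Par p x + bnDist Par q x + 2 * (Real.sqrt (bnDist Par p x) * Real.sqrt (bnDist Par q x)) := by
      intro x
      linear_combination Real.sq_sqrt (pp x).le + Real.sq_sqrt (qp x).le
    simp only [this, Finset.sum_add_distrib, ← Finset.mul_sum, sum_bn p hP, sum_bn q hP]
    rw [hBC]; ring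
  rw [c2, c3, Finset.sum_congr rfl (fun x _ => c1 x)] at cs
  have e : dTV (bnDist Par p) (bnDist Par q) ^ 2 = (∑ x, |bnDist Par p x - bnDist Par q x|) ^ 2 / 4 := by
    unfold dTV; ring
  rw [e]
  have hB1 : 0 ≤ 2 - 2 * BC := by rw [← c2]; exact Finset.sum_nonneg fun x _ => sq_nonneg _
  nlinarith

end

theorem specNorm_sub_le {ι : Type*} [Fintype ι] [DecidableEq ι] (A B : Matrix ι ι ℝ) :
    specNorm B ≤ specNorm A + specNorm (A - B) := by
  unfold specNorm
  rw [map_sub]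
  have := norm_sub_le (Matrix.toEuclideanCLM (𝕜 := ℝ) A)
    (Matrix.toEuclideanCLM (𝕜 := ℝ) A - Matrix.toEuclideanCLM (𝕜 := ℝ) B)
  simpa using this

theorem numeric (ε l β V wP a b C₁ : ℝ) (hε : 0 < ε) (hl : 1 ≤ l) (hβ : 0 < β) (hβ1 : β ≤ 1)
    (hr : 2000 * ε ≤ β) (hV : 0 ≤ V) (hC : 0 < C₁) (hwP : 98/100 ≤ wP) (hwP2 : wP ≤ 2)
    (h1 : wP * V ≤ ε + a + b)
    (ha : a ^ 2 ≤ 2 * ε * ((2 * C₁ * ε * l / β + ε) + 2 * ε + wP * (2 * (V / √β) + (V / √β) ^ 2) +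
      (48 * ε * l + 4 * ε * (V ^ 2 / β ^ 2))))
    (hb : b ^ 2 ≤ 2 * ε * (48 * ε * l + 4 * ε * (V ^ 2 / β ^ 2))) :
    V ≤ 2 * (C₁ + 61) * (ε * √l / √β) := by
  have hs0 : 0 < √β := Real.sqrt_pos.2 hβ
  have hs : √β ^ 2 = β := Real.sq_sqrt hβ.le
  have hs1 : √β ≤ 1 := Real.sqrt_le_one.2 hβ1
  have hl2 : √l ^ 2 = l := Real.sq_sqrt (by linarith)
  have hl1 : 1 ≤ √l := Real.one_le_sqrt.2 hl
  set T := ε * √l / √β with hT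
  have hT0 : 0 < T := by positivity
  have hT2 : T ^ 2 = ε ^ 2 * l / β := by rw [hT, div_pow, mul_pow, hl2, hs]
  have g1 : ε ^ 2 * l ≤ T ^ 2 := by
    rw [hT2, le_div_iff₀ hβ]; exact mul_le_of_le_one_right (by positivity) hβ1
  have g2 : ε ^ 2 ≤ T ^ 2 := le_trans (by nlinarith [sq_nonneg ε]) g1
  have g3 : ε ≤ T := (le_abs_self _).trans (abs_le_of_sq_le_sq g2 hT0.le)
  have g4 : ε * (V / √β) ≤ T * V := by
    have : T * V = √l * (ε * (V / √β)) := by rw [hT]; ring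
    rw [this]; exact le_mul_of_one_le_left (by positivity) hl1
  have hr' : ε / β ≤ 1 / 2000 := by rw [div_le_iff₀ hβ]; linarith
  have hr0 : 0 ≤ ε / β := by positivity
  have g5 : ε * (V / √β) ^ 2 ≤ 1 / 2000 * V ^ 2 := by
    have : ε * (V / √β) ^ 2 = ε / β * V ^ 2 := by rw [div_pow, hs]; ring
    rw [this]; exact mul_le_mul_of_nonneg_right hr' (sq_nonneg _)
  have g6 : ε * (ε * (V ^ 2 / β ^ 2)) ≤ 1 / 4000000 * V ^ 2 := by
    have : ε * (ε * (V ^ 2 / β ^ 2)) = (ε / β) ^ 2 * V ^ 2 := by field_simp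
    rw [this]; exact mul_le_mul_of_nonneg_right (by nlinarith) (sq_nonneg _)
  have g7 : ε * (2 * C₁ * ε * l / β) = 2 * C₁ * T ^ 2 := by rw [hT2]; ring
  have kb : b ^ 2 ≤ (10 * T + V / 10) ^ 2 := by
    have h0 : 0 ≤ T * V := by positivity
    have h2 : 2 * ε * (48 * ε * l + 4 * ε * (V ^ 2 / β ^ 2)) =
      96 * (ε ^ 2 * l) + 8 * (ε * (ε * (V ^ 2 / β ^ 2))) := by ring
    have h3 : (10 * T + V / 10) ^ 2 = 100 * T ^ 2 + 2 * (T * V) + V ^ 2 / 100 := by ring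
    rw [h2] at hb
    rw [h3]
    linarith [sq_nonneg V, sq_nonneg T]
  have kw : ε * (wP * (2 * (V / √β) + (V / √β) ^ 2)) ≤ 4 * (T * V) + 2 * (1 / 2000 * V ^ 2) := by
    have h0 : 0 ≤ ε * (2 * (V / √β) + (V / √β) ^ 2) := by positivity
    have h2 := mul_le_mul_of_nonneg_right hwP2 h0
    have h3 : ε * (wP * (2 * (V / √β) + (V / √β) ^ 2)) = wP * (ε * (2 * (V / √β) + (V / √β) ^ 2)) := by ring
    have h4 : 2 * (ε * (2 * (V / √β) + (V / √β) ^ 2)) = 4 * (ε * (V / √β)) + 2 * (ε * (V / √β) ^ 2) := by ring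
    linarith
  have ka : a ^ 2 ≤ ((C₁ + 50) * T + V / 7) ^ 2 := by
    have k1 : a ^ 2 ≤ (4 * C₁ + 102) * T ^ 2 + 8 * (T * V) + V ^ 2 / 100 := by
      have h2 : 2 * ε * ((2 * C₁ * ε * l / β + ε) + 2 * ε + wP * (2 * (V / √β) + (V / √β) ^ 2) +
        (48 * ε * l + 4 * ε * (V ^ 2 / β ^ 2))) = 2 * (ε * (2 * C₁ * ε * l / β)) + 6 * ε ^ 2 +
        2 * (ε * (wP * (2 * (V / √β) + (V / √β) ^ 2))) +
        (96 * (ε ^ 2 * l) + 8 * (ε * (ε * (V ^ 2 / β ^ 2)))) := by ring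
      rw [h2, g7] at ha
      linarith [sq_nonneg V]
    have k2 : 8 * (T * V) ≤ V ^ 2 / 100 + 1600 * T ^ 2 := by nlinarith [sq_nonneg (V / 10 - 40 * T)]
    have k3 : 0 ≤ (C₁ + 50) * (T * V) := by positivity
    have k4 : 0 ≤ C₁ ^ 2 * T ^ 2 := by positivity
    have k5 : 0 ≤ C₁ * T ^ 2 := by positivity
    have k6 : ((C₁ + 50) * T + V / 7) ^ 2 = C₁ ^ 2 * T ^ 2 + 100 * (C₁ * T ^ 2) + 2500 * T ^ 2 +
      2 / 7 * ((C₁ + 50) * (T * V)) + V ^ 2 / 49 := by ring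
    rw [k6]
    linarith [sq_nonneg V, sq_nonneg T]
  have kb' : b ≤ 10 * T + V / 10 := (le_abs_self _).trans (abs_le_of_sq_le_sq kb (by positivity))
  have ka' : a ≤ (C₁ + 50) * T + V / 7 := (le_abs_self _).trans (abs_le_of_sq_le_sq ka (by positivity))
  have := mul_le_mul_of_nonneg_right hwP hV
  have : 0 ≤ C₁ * T := by positivity
  linarith

set_option maxHeartbeats 2000000 in
theorem main_aux (c C₁ : ℝ) (hc : c ∈ Set.Ioc (0:ℝ) (1/2)) (hC : 0 < C₁)
    (d : ℕ) (hd : 1 ≤ d) (Par : Fin d → Finset (Fin d)) (hP : ∀ i : Fin d, ∀ j ∈ Par i, j < i)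
    (ε : ℝ) (hε : ε ∈ Set.Ioo (0:ℝ) (1/100)) (p q : BNIdx d Par → ℝ)
    (hp : ∀ k, p k ∈ Set.Icc c (1 - c)) (hq : ∀ k, q k ∈ Set.Icc (0:ℝ) 1)
    (R E L : (Fin d → Bool) → ℝ) (hR : IsProbDist R) (hE : IsProbDist E) (hL : IsProbDist L)
    (hEL : ∀ x, E x = 0 ∨ L x = 0) (wP wE wL : ℝ) (hwE : 0 ≤ wE) (hwL : 0 ≤ wL)
    (hwEL : wE + wL ≤ 2 * ε) (hw : wP + wE - wL = 1)
    (hmix : ∀ x, R x = wP * bnDist Par p x + wE * E x - wL * L x)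
    (hmin : ∀ k : BNIdx d Par, 1000 / c * Real.sqrt ε * Real.log (1 / ε) ^ ((1:ℝ)/4)
              ≤ prCfg Par (bnDist Par p) k)
    (hmean : enorm2 (fun k : BNIdx d Par => q k - expec R (fun x => Fvec Par x q k)) ≤ ε)
    (M : Matrix (BNIdx d Par) (BNIdx d Par) ℝ)
    (hM : specNorm (M - covM0 Par R q) ≤ ε) (α : ℝ) (hα : 0 < α)
    (hαR : |α - ⨅ k : BNIdx d Par, prCfg Par R k| ≤ ε)
    (hMs : specNorm M ≤ C₁ * ε * Real.log (1 / ε) / α) :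
    dTV (bnDist Par p) (bnDist Par q) ≤
            (4 * (C₁ + 61) / c) * ε * Real.sqrt (Real.log (1 / ε)) /
              ⨅ k : BNIdx d Par, prCfg Par (bnDist Par p) k := by
  obtain ⟨hc0, hc1⟩ := hc
  obtain ⟨hε0, hε1⟩ := hε
  have hne : Nonempty (BNIdx d Par) := ⟨⟨⟨0, hd⟩, fun _ => true⟩⟩
  set P := bnDist Par p with hPd
  set l := Real.log (1 / ε) with hld
  set β := ⨅ k : BNIdx d Par, prCfg Par P k with hβd
  have hl : 1 ≤ l := by
    rw [hld, Real.le_log_iff_exp_le (by positivity)]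
    have := Real.exp_one_lt_d9
    rw [le_div_iff₀ hε0]; nlinarith
  have hp01 : ∀ k, p k ∈ Set.Icc (0:ℝ) 1 := fun k => ⟨by linarith [(hp k).1], by linarith [(hp k).2]⟩
  have hPn : ∀ x, 0 ≤ P x := bn_nonneg p hp01
  have hP1 : ∑ x, P x = 1 := sum_bn p hP
  have hβk : ∀ k, β ≤ prCfg Par P k := fun k => ciInf_le (Set.finite_range _).bddBelow k
  have hr0 : ε ≤ c / 1000 * β := by
    have h1 : 1000 / c * √ε ≤ β := by
      refine le_ciInf fun k => le_trans ?_ (hmin k)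
      exact le_mul_of_one_le_right (by positivity) (Real.one_le_rpow hl (by norm_num))
    have h2 : √ε * √ε = ε := Real.mul_self_sqrt hε0.le
    have h3 : √ε ≤ 1 := Real.sqrt_le_one.2 (by linarith)
    have h4 : √ε ≤ c / 1000 * β := by
      have := mul_le_mul_of_nonneg_left h1 (by positivity : 0 ≤ c / 1000)
      refine le_trans (le_of_eq ?_) this
      field_simp
    nlinarith [Real.sqrt_nonneg ε]
  have hβ : 0 < β := by
    by_contra h
    have : c / 1000 * β ≤ 0 := mul_nonpos_of_nonneg_of_nonpos (by positivity) (not_lt.1 h)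
    linarith
  have hr : 2000 * ε ≤ β := by nlinarith
  have prle : ∀ (S : (Fin d → Bool) → ℝ), IsProbDist S → ∀ k : BNIdx d Par,
      0 ≤ prCfg Par S k ∧ prCfg Par S k ≤ 1 := by
    intro S hS k
    refine ⟨Finset.sum_nonneg fun x _ => ?_, ?_⟩
    · split_ifs
      · exact hS.1 x
      · exact le_rfl
    · rw [← hS.2]
      refine Finset.sum_le_sum fun x _ => ?_
      split_ifs
      · exact le_rfl
      · exact hS.1 x
  have hβ1 : β ≤ 1 := by
    obtain ⟨k⟩ := hne
    exact (hβk k).trans (prle P ⟨hPn, hP1⟩ k).2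
  have hwP : 98/100 ≤ wP := by linarith
  have hwP2 : wP ≤ 2 := by linarith
  have prR : ∀ k, prCfg Par R k = wP * prCfg Par P k + wE * prCfg Par E k - wL * prCfg Par L k := by
    intro k
    unfold prCfg
    rw [Finset.mul_sum, Finset.mul_sum, Finset.mul_sum, ← Finset.sum_add_distrib, ← Finset.sum_sub_distrib]
    refine Finset.sum_congr rfl fun x _ => ?_
    split_ifs
    · exact hmix x
    · simp
  have exR : ∀ g, expec R g = wP * expec P g + wE * expec E g - wL * expec L g := by
    intro g
    unfold expec
    rw [Finset.mul_sum, Finset.mul_sum, Finset.mul_sum, ← Finset.sum_add_distrib, ← Finset.sum_sub_distrib]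
    refine Finset.sum_congr rfl fun x _ => ?_
    rw [hmix x]; ring
  have hαβ : β / 2 ≤ α := by
    have h1 : wP * β - 2 * ε ≤ ⨅ k : BNIdx d Par, prCfg Par R k := by
      refine le_ciInf fun k => ?_
      rw [prR k]
      have h2 := mul_le_mul_of_nonneg_left (hβk k) (by linarith : 0 ≤ wP)
      have h3 := mul_nonneg hwE (prle E hE k).1
      have h4 := mul_le_mul_of_nonneg_left (prle L hL k).2 hwL
      linarith
    have h2 := (abs_le.1 hαR).1
    nlinarith
  have hM0 : specNorm (covM0 Par R q) ≤ 2 * C₁ * ε * l / β + ε := by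
    have h1 := specNorm_sub_le M (covM0 Par R q)
    have h2 : C₁ * ε * l / α ≤ 2 * C₁ * ε * l / β := by
      rw [div_le_div_iff₀ hα hβ]
      have : 0 ≤ C₁ * ε * l := by positivity
      nlinarith
    linarith
  -- mean bound
  have hRm : ∀ u : BNIdx d Par → ℝ, ∑ k, u k ^ 2 ≤ 1 → |expec R (lin Par u q)| ≤ ε := by
    intro u hu
    have h1 : expec R (lin Par u q) = ∑ k, u k * (-(q k - expec R (fun x => Fvec Par x q k))) := by
      have : lin Par u q = fun x => ∑ k, u k * (Fvec Par x q k + (- q k)) := by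
        funext x; rw [lin_eq]; rfl
      rw [this, expec_sum]
      refine Finset.sum_congr rfl fun k _ => ?_
      rw [expec_smul, expec_add, expec_const, hR.2]; ring
    have h2 := Finset.sum_mul_sq_le_sq_mul_sq Finset.univ u
      (fun k => -(q k - expec R (fun x => Fvec Par x q k)))
    have h3 := (Real.sqrt_le_left hε0.le).1 hmean
    simp only [neg_sq] at h2
    rw [← h1] at h2
    refine abs_le_of_sq_le_sq ?_ hε0.le
    have h4 : 0 ≤ ∑ k, (q k - expec R (fun x => Fvec Par x q k)) ^ 2 := Finset.sum_nonneg fun k _ => sq_nonneg _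
    nlinarith
  have hPlin : ∀ u : BNIdx d Par → ℝ, expec P (lin Par u q) = ∑ k, u k * (prCfg Par P k * (p k - q k)) := by
    intro u
    have : lin Par u q = fun x => lin Par u p x + bias Par u p q x := by funext x; exact lin_split u p q x
    rw [this, expec_add, expec_linp hP p u, zero_add]
    have := expec_kp (Par := Par) P (fun k => u k * (p k - q k))
    refine Eq.trans this (Finset.sum_congr rfl fun k _ => by ring)
  set v : BNIdx d Par → ℝ := fun k => prCfg Par P k * (p k - q k) with hv
  -- coordinate bound
  have hpq : ∀ k, |p k - q k| ≤ c / 2 := by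
    intro k
    set u : BNIdx d Par → ℝ := fun j => if j = k then 1 else 0 with hu
    have hu1 : ∑ j, u j ^ 2 ≤ 1 := by simp [hu]
    have hlin : ∀ x, |lin Par u q x| ≤ 1 := by
      intro x
      rw [lin_eq]
      simp only [hu, ite_mul, one_mul, zero_mul, Finset.sum_ite_eq', Finset.mem_univ, if_true]
      have := (hq k).1
      have := (hq k).2
      unfold Fvec
      split_ifs <;> rw [abs_le] <;> constructor <;> linarith
    have hb : ∀ S, IsProbDist S → |expec S (lin Par u q)| ≤ 1 := by
      intro S hS
      have h1 := expec_mono S _ (fun _ => 1) hS.1 (fun x => (abs_le.1 (hlin x)).2)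
      have h2 := expec_mono S (fun _ => -1) _ hS.1 (fun x => (abs_le.1 (hlin x)).1)
      rw [expec_const, hS.2] at h1 h2
      rw [abs_le]; constructor <;> linarith
    have h1 := hRm u hu1
    rw [exR, hPlin] at h1
    simp only [hu, ite_mul, one_mul, zero_mul, Finset.sum_ite_eq', Finset.mem_univ, if_true] at h1
    rw [abs_le] at h1
    obtain ⟨e1, e2⟩ := abs_le.1 (hb E hE)
    obtain ⟨l1, l2⟩ := abs_le.1 (hb L hL)
    have e1' := mul_le_mul_of_nonneg_left e1 hwE
    have e2' := mul_le_mul_of_nonneg_left e2 hwE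
    have l1' := mul_le_mul_of_nonneg_left l1 hwL
    have l2' := mul_le_mul_of_nonneg_left l2 hwL
    have h3 : |wP * (prCfg Par P k * (p k - q k))| ≤ 3 * ε := by
      rw [abs_le]; constructor <;> linarith [h1.1, h1.2]
    rw [abs_mul, abs_mul, abs_of_nonneg (by linarith : 0 ≤ wP),
      abs_of_nonneg (hβ.le.trans (hβk k))] at h3
    have h4 : 98/100 * (β * |p k - q k|) ≤ wP * (prCfg Par P k * |p k - q k|) := by
      have := hβk k
      have := abs_nonneg (p k - q k)
      gcongr
    by_contra hcon
    have h5 : β * (c / 2) ≤ β * |p k - q k| := mul_le_mul_of_nonneg_left (not_le.1 hcon).le hβ.le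
    nlinarith
  -- core estimate
  have hRdom : ∀ x, wL * L x ≤ wP * P x := by
    intro x
    rcases hEL x with h | h
    · have h1 := hR.1 x
      rw [hmix x, h] at h1; linarith
    · rw [h]; have := mul_nonneg (by linarith : 0 ≤ wP) (hPn x); linarith
  set V := √(∑ k, v k ^ 2) with hV
  have hV2 : V ^ 2 = ∑ k, v k ^ 2 := Real.sq_sqrt (Finset.sum_nonneg fun k _ => sq_nonneg _)
  have hV0 : 0 ≤ V := Real.sqrt_nonneg _
  have hsβ : √β ^ 2 = β := Real.sq_sqrt hβ.le
  have hsβ0 : 0 < √β := Real.sqrt_pos.2 hβ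
  have hD2 : ∑ k, prCfg Par P k * (p k - q k) ^ 2 ≤ (V / √β) ^ 2 := by
    rw [div_pow, hV2, hsβ, le_div_iff₀ hβ, Finset.sum_mul]
    refine Finset.sum_le_sum fun k _ => ?_
    have h1 := mul_le_mul_of_nonneg_left (hβk k)
      (mul_nonneg (hβ.le.trans (hβk k)) (sq_nonneg (p k - q k)))
    refine h1.trans (le_of_eq ?_)
    rw [hv]; ring
  have hΔ2 : ∑ k, (p k - q k) ^ 2 ≤ V ^ 2 / β ^ 2 := by
    rw [hV2, le_div_iff₀ (by positivity), Finset.sum_mul]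
    refine Finset.sum_le_sum fun k _ => ?_
    have h0 : β ^ 2 ≤ prCfg Par P k ^ 2 := by have := hβk k; gcongr
    have h1 := mul_le_mul_of_nonneg_left h0 (sq_nonneg (p k - q k))
    refine h1.trans (le_of_eq ?_)
    rw [hv]; ring
  have core : V ≤ 2 * (C₁ + 61) * (ε * √l / √β) := by
    rcases hV0.eq_or_lt with h0 | hVpos
    · rw [← h0]; positivity
    set u : BNIdx d Par → ℝ := fun k => v k / V with hu
    have hu1 : ∑ k, u k ^ 2 ≤ 1 := by
      simp only [hu, div_pow]
      rw [← Finset.sum_div, ← hV2, div_self (by positivity)]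
    have huv : expec P (lin Par u q) = V := by
      rw [hPlin]
      have : ∀ k, u k * (prCfg Par P k * (p k - q k)) = v k ^ 2 / V := by
        intro k; rw [hu, hv]; ring
      rw [Finset.sum_congr rfl (fun k _ => this k), ← Finset.sum_div, ← hV2]
      field_simp
    set g := lin Par u q with hg
    set Dg := fun x => ∑ i, (u (kp Par x i) * (bit x i - q (kp Par x i))) ^ 2 with hDg
    have hDg0 : ∀ x, 0 ≤ Dg x := fun x => Finset.sum_nonneg fun i _ => sq_nonneg _
    have hDg1 : ∀ x, Dg x ≤ 1 := diag_le q u hq hu1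
    have q1 : expec R (fun x => g x ^ 2) - expec R Dg ≤ 2 * C₁ * ε * l / β + ε :=
      (quad_form R u q hu1).trans hM0
    have q2 : expec P Dg - expec P (fun x => g x ^ 2) ≤ 2 * (V / √β) + (V / √β) ^ 2 :=
      P_side hP p q u hp01 hu1 (V / √β) (by positivity) hD2
    -- L part
    have yL : wL * expec L (fun x => g x ^ 2) ≤ 48 * ε * l + 4 * ε * (V ^ 2 / β ^ 2) := by
      have t1 := tail_moment hP p hp01 u hu1 (fun x => wL * L x) (fun x => mul_nonneg hwL (hL.1 x)) wP ε hε0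
        hwP2 hRdom (by rw [← Finset.mul_sum, hL.2]; linarith) hl
      have t2 : expec (fun x => wL * L x) (fun x => lin Par u p x ^ 2) =
          wL * expec L (fun x => lin Par u p x ^ 2) := by
        unfold expec; rw [Finset.mul_sum]; exact Finset.sum_congr rfl fun x _ => by ring
      rw [t2] at t1
      have t3 : expec L (fun x => g x ^ 2) ≤
          2 * expec L (fun x => lin Par u p x ^ 2) + 2 * (V ^ 2 / β ^ 2) := by
        have := expec_mono L (fun x => g x ^ 2) (fun x => 2 * lin Par u p x ^ 2 + 2 * (V ^ 2 / β ^ 2)) hL.1 ?_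
        · rw [expec_add, expec_smul, expec_const, hL.2, one_mul] at this
          exact this
        · intro x
          have b1 := (bias_sq_le u p q hu1 x).trans ((sum_kp_le (Par := Par) x (fun k => (p k - q k) ^ 2)
            (fun k => sq_nonneg _)).trans hΔ2)
          rw [hg, lin_split u p q]
          nlinarith [sq_nonneg (lin Par u p x - bias Par u p q x)]
      have t4 := mul_le_mul_of_nonneg_left t3 hwL
      have t5 : wL * (V ^ 2 / β ^ 2) ≤ 2 * ε * (V ^ 2 / β ^ 2) :=
        mul_le_mul_of_nonneg_right (by linarith) (by positivity)
      linarith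
    have xE : wE * expec E (fun x => g x ^ 2) ≤ (2 * C₁ * ε * l / β + ε) + 2 * ε +
        wP * (2 * (V / √β) + (V / √β) ^ 2) + (48 * ε * l + 4 * ε * (V ^ 2 / β ^ 2)) := by
      rw [exR, exR] at q1
      have s1 := mul_le_mul_of_nonneg_left q2 (by linarith : 0 ≤ wP)
      have s2 : expec E Dg ≤ 1 := by
        have := expec_mono E Dg (fun _ => 1) hE.1 hDg1
        rwa [expec_const, hE.2, one_mul] at this
      have s3 := mul_le_mul_of_nonneg_left s2 hwE
      have s4 := mul_nonneg hwL (expec_nonneg L Dg hL.1 hDg0)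
      linarith
    have csg : ∀ S, IsProbDist S → ∀ w X : ℝ, 0 ≤ w → w ≤ 2 * ε → w * expec S (fun x => g x ^ 2) ≤ X →
        (w * expec S g) ^ 2 ≤ 2 * ε * X := by
      intro S hS w X hw0 hw1 hX
      have h1 := expec_cs S g (fun _ => 1) hS.1
      rw [expec_const, hS.2] at h1
      simp only [mul_one, one_pow] at h1
      have h2 : 0 ≤ expec S (fun x => g x ^ 2) := expec_nonneg _ _ hS.1 fun x => sq_nonneg _
      calc (w * expec S g) ^ 2 = w * (w * expec S g ^ 2) := by ring
        _ ≤ w * (w * expec S (fun x => g x ^ 2)) := by gcongr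
        _ ≤ 2 * ε * (w * expec S (fun x => g x ^ 2)) := mul_le_mul_of_nonneg_right hw1 (mul_nonneg hw0 h2)
        _ ≤ 2 * ε * X := by gcongr
    refine numeric ε l β V wP (-(wE * expec E g)) (wL * expec L g) C₁ hε0 hl hβ hβ1 hr hV0 hC hwP hwP2 ?_ ?_ ?_
    · have h1 := (abs_le.1 (hRm u hu1)).2
      rw [exR, huv] at h1
      linarith
    · rw [neg_sq]
      exact csg E hE wE _ hwE (by linarith) xE
    · exact csg L hL wL _ hwL (by linarith) yL
  -- conclusion
  have hqc : ∀ k, c / 2 ≤ q k ∧ q k ≤ 1 - c / 2 := by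
    intro k
    have h1 := abs_le.1 (hpq k)
    have h2 := hp k
    exact ⟨by linarith [h2.1, h1.2], by linarith [h2.2, h1.1]⟩
  have tv := tv_le_kl hP p q (fun k => ⟨by linarith [(hp k).1], by linarith [(hp k).2]⟩)
    (fun k => ⟨by linarith [(hqc k).1], by linarith [(hqc k).2]⟩)
  have kl : ∑ k, prCfg Par P k * ((p k - q k) ^ 2 / (q k * (1 - q k))) ≤ (2 / c * (V / √β)) ^ 2 := by
    rw [mul_pow]
    refine le_trans ?_ (mul_le_mul_of_nonneg_left hD2 (sq_nonneg _))
    rw [Finset.mul_sum]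
    refine Finset.sum_le_sum fun k _ => ?_
    rw [mul_left_comm]
    refine mul_le_mul_of_nonneg_left ?_ (hβ.le.trans (hβk k))
    obtain ⟨h1, h2⟩ := hqc k
    have h3 : c ^ 2 / 4 ≤ q k * (1 - q k) := by nlinarith
    have h4 : 0 < c ^ 2 / 4 := by positivity
    calc (p k - q k) ^ 2 / (q k * (1 - q k)) ≤ (p k - q k) ^ 2 / (c ^ 2 / 4) := by gcongr
      _ = (2 / c) ^ 2 * (p k - q k) ^ 2 := by field_simp; ring
  have fin1 : dTV P (bnDist Par q) ≤ 2 / c * (V / √β) :=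
    (le_abs_self _).trans (abs_le_of_sq_le_sq (tv.trans kl) (by positivity))
  refine fin1.trans ?_
  have h1 : V / √β ≤ 2 * (C₁ + 61) * (ε * √l / √β) / √β := by gcongr
  have h2 := mul_le_mul_of_nonneg_left h1 (by positivity : 0 ≤ 2 / c)
  refine h2.trans (le_of_eq ?_)
  rw [← hsβ]
  rw [Real.sqrt_sq hsβ0.le]
  field_simp
  ring
theorem small_specNorm_implies_tv_close :
    ∀ (c C₁ : ℝ), c ∈ Set.Ioc (0:ℝ) (1/2) → 0 < C₁ →
    ∃ c₂ C₃ : ℝ, 0 < c₂ ∧ 0 < C₃ ∧ ∃ ε₀ : ℝ, ε₀ ∈ Set.Ioo (0:ℝ) 1 ∧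
      ∀ (d : ℕ), 1 ≤ d → ∀ (Par : Fin d → Finset (Fin d)),
        (∀ i : Fin d, ∀ j ∈ Par i, j < i) →
        ∀ (ε : ℝ), ε ∈ Set.Ioo 0 ε₀ →
        ∀ (p q : BNIdx d Par → ℝ),
          (∀ k, p k ∈ Set.Icc c (1 - c)) → (∀ k, q k ∈ Set.Icc (0:ℝ) 1) →
        ∀ (Ptld Edist Ldist : (Fin d → Bool) → ℝ),
          IsProbDist Ptld → IsProbDist Edist → IsProbDist Ldist →
          (∀ x, Edist x = 0 ∨ Ldist x = 0) →
        ∀ (wP wE wL : ℝ), 0 ≤ wE → 0 ≤ wL → wE + wL ≤ 2 * ε →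
          wP + wE - wL = 1 →
          (∀ x, Ptld x = wP * bnDist Par p x + wE * Edist x - wL * Ldist x) →
          (∀ k : BNIdx d Par,
            c₂ * Real.sqrt ε * Real.log (1 / ε) ^ ((1:ℝ)/4)
              ≤ prCfg Par (bnDist Par p) k) →
          enorm2 (fun k : BNIdx d Par =>
            q k - expec Ptld (fun x => Fvec Par x q k)) ≤ ε →
        ∀ (M : Matrix (BNIdx d Par) (BNIdx d Par) ℝ), M.IsSymm →
          (∀ k, M k k = 0) →
          specNorm (M - covM0 Par Ptld q) ≤ ε →
        ∀ (α : ℝ), 0 < α →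
          |α - ⨅ k : BNIdx d Par, prCfg Par Ptld k| ≤ ε →
          specNorm M ≤ C₁ * ε * Real.log (1 / ε) / α →
          dTV (bnDist Par p) (bnDist Par q) ≤
            C₃ * ε * Real.sqrt (Real.log (1 / ε)) /
              ⨅ k : BNIdx d Par, prCfg Par (bnDist Par p) k := by
  intro c C₁ hc hC
  refine ⟨1000 / c, 4 * (C₁ + 61) / c, div_pos (by norm_num) hc.1, div_pos (by linarith) hc.1,
    1 / 100, ⟨by norm_num, by norm_num⟩, ?_⟩
  intro d hd Par hP ε hε p q hp hq R E L hR hE hL hEL wP wE wL hwE hwL hwEL hw hmix hmin hmean M _ _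
    hM α hα hαR hMs
  exact main_aux c C₁ hc hC d hd Par hP ε hε p q hp hq R E L hR hE hL hEL wP wE wL hwE hwL hwEL hw
    hmix hmin hmean M hM α hα hαR hMs
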